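/- Let F : ℝ^d → ℝ^d be four times continuously differentiable, and let y : ℝ → ℝ^d solve the autonomous ODE y'(t) = F(y(t)) with y(0) = y₀. For Δt > 0 define the two-stage update: y* = y₀ + (Δt/2)·F(y₀) + (Δt²/8)·DF(y₀)(F(y₀)) and y¹ = y₀ + Δt·F(y₀) + (Δt²/6)·(DF(y₀)(F(y₀)) + 2·DF(y*)(F(y*))), where DF denotes the Fréchet derivative of F. Then ‖y¹ − y(Δt)‖ = O(Δt⁵) as Δt → 0⁺; that is, the two-stage method has fourth-order local truncation error. -/

import Mathlib

open Topology Filter Asymptotics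

/-!
Put `G x = DF(x)(F x)`, so that `y'' = G ∘ y`. The weights `h²/6` and `2h²/6` at the nodes `0` and
`h/2` integrate quadratic `y''` exactly in the Taylor remainder `∫₀ʰ (h - s) y''(t₀ + s) ds`, so the
update would be off by only `O(h⁵)` if it evaluated `G` at `y(t₀ + h/2)`. The predictor is the
quadratic Taylor polynomial of `y` at `t₀`, so it misses that point by `O(h³)`, and the factor `h²`
in front of `G` turns this into `O(h⁵)` as well.
-/

section Asymptotics

variable {𝕜 E : Type*} [NormedField 𝕜] [NormedAddCommGroup E]

theorem isBigO_pow_comp_div_const {f : 𝕜 → E} {n : ℕ} (hf : f =O[𝓝 0] (· ^ n)) (c : 𝕜) :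
    (fun h ↦ f (h / c)) =O[𝓝 0] (· ^ n) := by
  have tendsto_div : Tendsto (fun h : 𝕜 ↦ h / c) (𝓝 0) (𝓝 0) :=
    (continuous_id.div_const c).tendsto' 0 0 (zero_div c)
  have div_isBigO : (fun h : 𝕜 ↦ h / c) =O[𝓝 0] fun h ↦ h := by
    simpa only [div_eq_inv_mul] using isBigO_const_mul_self c⁻¹ (fun h : 𝕜 ↦ h) (𝓝 0)
  exact (hf.comp_tendsto tendsto_div).trans (div_isBigO.pow n)

variable [NormedSpace 𝕜 E]

theorem isBigO_const_mul_pow_smul {f : 𝕜 → E} {n : ℕ} (hf : f =O[𝓝 0] (· ^ n)) (c : 𝕜) (m : ℕ) :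
    (fun h ↦ (c * h ^ m) • f h) =O[𝓝 0] (· ^ (m + n)) := by
  simpa only [smul_eq_mul, ← pow_add] using
    (isBigO_const_mul_self c (fun h : 𝕜 ↦ h ^ m) (𝓝 0)).smul hf

end Asymptotics

section Taylor

open scoped Nat

variable {E : Type*} [NormedAddCommGroup E] [NormedSpace ℝ E] {f : ℝ → E} {x₀ : ℝ}

theorem taylor_isBigO_of_contDiffAt {n : ℕ} (hf : ContDiffAt ℝ (n + 1) f x₀) :
    (fun h ↦ f (x₀ + h) - ∑ k ∈ Finset.range (n + 1), ((k ! : ℝ)⁻¹ * h ^ k) • iteratedDeriv k f x₀)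
      =O[𝓝 0] (· ^ (n + 1)) := by
  obtain ⟨u, hu, hfu⟩ := hf.contDiffOn (m := (n + 1 : ℕ)) le_rfl (by simp)
  obtain ⟨ε, hε, hball⟩ := Metric.mem_nhds_iff.1 (by simpa using hu)
  have hx₀ : x₀ ∈ Metric.ball x₀ ε := Metric.mem_ball_self hε
  have taylor_succ := taylor_isLittleO (convex_ball x₀ ε) hx₀ (hfu.mono hball)
  rw [Metric.isOpen_ball.nhdsWithin_eq hx₀] at taylor_succ
  have tendsto_add : Tendsto (x₀ + ·) (𝓝 0) (𝓝 x₀) :=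
    (continuous_const_add x₀).tendsto' 0 x₀ (add_zero x₀)
  have leading_term := isBigO_const_mul_pow_smul
    (f := fun _ ↦ iteratedDeriv (n + 1) f x₀) (n := 0)
    (by simpa only [pow_zero] using isBigO_const_const _ one_ne_zero _) ((n + 1)! : ℝ)⁻¹ (n + 1)
  refine ((taylor_succ.isBigO.comp_tendsto tendsto_add).congr_right fun h ↦ ?_).add leading_term
    |>.congr_left fun h ↦ ?_
  · simp only [Function.comp_apply, add_sub_cancel_left, add_zero]
  · simp only [Function.comp_apply, taylor_within_apply, add_sub_cancel_left,
      iteratedDerivWithin_of_isOpen Metric.isOpen_ball hx₀]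
    rw [Finset.sum_range_succ _ (n + 1)]
    abel

theorem quadraticTaylor_isBigO (hf : ContDiffAt ℝ 3 f x₀) :
    (fun h ↦ f (x₀ + h) - (f x₀ + h • deriv f x₀ + (h ^ 2 / 2) • deriv (deriv f) x₀))
      =O[𝓝 0] (· ^ 3) := by
  refine (taylor_isBigO_of_contDiffAt (n := 2) (mod_cast hf)).congr_left fun h ↦ ?_
  simp only [Finset.sum_range_succ, Finset.sum_range_zero, iteratedDeriv_succ, iteratedDeriv_zero,
    Nat.factorial]
  push_cast
  module

theorem twoPointQuadrature_isBigO (hf : ContDiffAt ℝ 5 f x₀) :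
    (fun h ↦ f x₀ + h • deriv f x₀
        + (h ^ 2 / 6) • (deriv (deriv f) x₀ + (2 : ℝ) • deriv (deriv f) (x₀ + h / 2))
        - f (x₀ + h))
      =O[𝓝 0] (· ^ 5) := by
  have expand_f := taylor_isBigO_of_contDiffAt (n := 4) (mod_cast hf)
  have hf'' : ContDiffAt ℝ 3 (deriv (deriv f)) x₀ :=
    (hf.derivWithin (m := 4) (by norm_num)).derivWithin (by norm_num)
  have expand_f'' := isBigO_const_mul_pow_smul
    (isBigO_pow_comp_div_const (quadraticTaylor_isBigO hf'') 2) 3⁻¹ 2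
  refine (expand_f''.sub expand_f).congr_left fun h ↦ ?_
  simp only [Finset.sum_range_succ, Finset.sum_range_zero, iteratedDeriv_succ, iteratedDeriv_zero,
    Nat.factorial]
  push_cast
  module

end Taylor

section AutonomousODE

variable {𝕜 E : Type*} [NontriviallyNormedField 𝕜] [NormedAddCommGroup E] [NormedSpace 𝕜 E]
  {F : E → E} {y : 𝕜 → E} {t₀ : 𝕜}

theorem contDiffAt_succ_of_eventually_hasDerivAt {f f' : 𝕜 → E} {n : ℕ}
    (hf : ∀ᶠ t in 𝓝 t₀, HasDerivAt f (f' t) t) (hf' : ContDiffAt 𝕜 n f' t₀) :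
    ContDiffAt 𝕜 (n + 1) f t₀ :=
  contDiffAt_succ_iff_hasFDerivAt.2
    ⟨fun t ↦ ContinuousLinearMap.toSpanSingleton 𝕜 (f' t),
      ⟨_, hf, fun _ ht ↦ ht.hasFDerivAt⟩,
      (ContinuousLinearMap.toSpanSingletonCLE (𝕜 := 𝕜) (E := E)).contDiff.contDiffAt.comp t₀ hf'⟩

theorem contDiffAt_succ_of_ode {n : ℕ} (hF : ContDiffAt 𝕜 n F (y t₀))
    (hy : ∀ᶠ t in 𝓝 t₀, HasDerivAt y (F (y t)) t) : ContDiffAt 𝕜 (n + 1) y t₀ := by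
  refine contDiffAt_succ_of_eventually_hasDerivAt hy (hF.comp t₀ ?_)
  induction n with
  | zero =>
    exact contDiffAt_zero.2 ⟨_, hy, fun t ht ↦ ht.continuousAt.continuousWithinAt⟩
  | succ n ih =>
    have hF' : ContDiffAt 𝕜 n F (y t₀) := hF.of_le (by norm_cast; exact n.le_succ)
    exact mod_cast contDiffAt_succ_of_eventually_hasDerivAt hy (hF'.comp t₀ (ih hF'))

end AutonomousODE

section FlowDeriv

variable {E : Type*} [NormedAddCommGroup E] [NormedSpace ℝ E] {F : E → E} {y : ℝ → E} {t₀ : ℝ}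

/-- The time derivative `∂ₜF = DF · F` of a vector field along its own flow, as supplied by a
Lax–Wendroff type solver. -/
noncomputable def flowDeriv (F : E → E) (x : E) : E :=
  fderiv ℝ F x (F x)

theorem contDiffAt_flowDeriv {n : WithTop ℕ∞} {x : E} (hF : ContDiffAt ℝ (n + 1) F x) :
    ContDiffAt ℝ n (flowDeriv F) x :=
  (hF.fderiv_right le_rfl).clm_apply (hF.of_le le_self_add)

theorem deriv_deriv_eventuallyEq_flowDeriv (hF : ContDiffAt ℝ 1 F (y t₀))
    (hy : ∀ᶠ t in 𝓝 t₀, HasDerivAt y (F (y t)) t) :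
    deriv (deriv y) =ᶠ[𝓝 t₀] fun t ↦ flowDeriv F (y t) := by
  have deriv_y : deriv y =ᶠ[𝓝 t₀] fun t ↦ F (y t) := hy.mono fun t ht ↦ ht.deriv
  have differentiable_F : ∀ᶠ t in 𝓝 t₀, DifferentiableAt ℝ F (y t) :=
    hy.self_of_nhds.continuousAt.eventually
      ((hF.eventually (by simp)).mono fun x hx ↦ hx.differentiableAt one_ne_zero)
  filter_upwards [deriv_y.deriv, hy, differentiable_F] with t deriv_deriv_y hyt hFt
  exact deriv_deriv_y.trans (hFt.hasFDerivAt.comp_hasDerivAt t hyt).deriv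

end FlowDeriv

section TwoStage

variable {E : Type*} [NormedAddCommGroup E] [NormedSpace ℝ E] {F : E → E} {y : ℝ → E} {t₀ : ℝ}

/-- The first stage `y*` of the two-stage method with step `h` from `x`: a prediction of the
solution of `y' = F y` after time `h / 2`. -/
noncomputable def midpointPredictor (F : E → E) (x : E) (h : ℝ) : E :=
  x + (h / 2) • F x + (h ^ 2 / 8) • flowDeriv F x

/-- One full step of length `h` of the two-stage method for `y' = F y`, starting from `x`. -/
noncomputable def twoStageStep (F : E → E) (x : E) (h : ℝ) : E :=
  x + h • F x
    + (h ^ 2 / 6) • (flowDeriv F x + (2 : ℝ) • flowDeriv F (midpointPredictor F x h))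

theorem tendsto_midpointPredictor (F : E → E) (x : E) :
    Tendsto (midpointPredictor F x) (𝓝 0) (𝓝 x) := by
  have : Continuous (midpointPredictor F x) := by unfold midpointPredictor; fun_prop
  exact this.tendsto' 0 x (by simp [midpointPredictor])

theorem midpointPredictor_sub_isBigO (hF : ContDiffAt ℝ 2 F (y t₀))
    (hy : ∀ᶠ t in 𝓝 t₀, HasDerivAt y (F (y t)) t) :
    (fun h ↦ midpointPredictor F (y t₀) h - y (t₀ + h / 2)) =O[𝓝 0] (· ^ 3) := by
  have y_contDiffAt : ContDiffAt ℝ 3 y t₀ := mod_cast contDiffAt_succ_of_ode (n := 2) hF hy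
  have deriv_y : deriv y t₀ = F (y t₀) := hy.self_of_nhds.deriv
  have deriv_deriv_y : deriv (deriv y) t₀ = flowDeriv F (y t₀) :=
    (deriv_deriv_eventuallyEq_flowDeriv (hF.of_le one_le_two) hy).self_of_nhds
  refine (isBigO_pow_comp_div_const (quadraticTaylor_isBigO y_contDiffAt) 2).neg_left.congr_left
    fun h ↦ ?_
  rw [deriv_y, deriv_deriv_y, midpointPredictor]
  module

theorem flowDeriv_midpointPredictor_sub_isBigO (hF : ContDiffAt ℝ 2 F (y t₀))
    (hy : ∀ᶠ t in 𝓝 t₀, HasDerivAt y (F (y t)) t) :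
    (fun h ↦ flowDeriv F (midpointPredictor F (y t₀) h) - flowDeriv F (y (t₀ + h / 2)))
      =O[𝓝 0] (· ^ 3) := by
  have strictDeriv : HasStrictFDerivAt (flowDeriv F) (fderiv ℝ (flowDeriv F) (y t₀)) (y t₀) :=
    (contDiffAt_flowDeriv (n := 1) (mod_cast hF)).hasStrictFDerivAt one_ne_zero
  have tendsto_midpoint : Tendsto (fun h ↦ y (t₀ + h / 2)) (𝓝 0) (𝓝 (y t₀)) :=
    hy.self_of_nhds.continuousAt.tendsto.comp
      (Continuous.tendsto' (by fun_prop) 0 t₀ (by simp))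
  exact (strictDeriv.isBigO_sub.comp_tendsto
    ((tendsto_midpointPredictor F (y t₀)).prodMk_nhds tendsto_midpoint)).trans
      (midpointPredictor_sub_isBigO hF hy)

theorem two_stage_fourth_order_local_truncation_error_general (hF : ContDiffAt ℝ 4 F (y t₀))
    (hy : ∀ᶠ t in 𝓝 t₀, HasDerivAt y (F (y t)) t) :
    (fun h ↦ twoStageStep F (y t₀) h - y (t₀ + h)) =O[𝓝 0] (· ^ 5) := by
  have y_contDiffAt : ContDiffAt ℝ 5 y t₀ := mod_cast contDiffAt_succ_of_ode (n := 4) hF hy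
  have deriv_y : deriv y t₀ = F (y t₀) := hy.self_of_nhds.deriv
  have deriv_deriv_y : deriv (deriv y) =ᶠ[𝓝 t₀] fun t ↦ flowDeriv F (y t) :=
    deriv_deriv_eventuallyEq_flowDeriv (hF.of_le (by norm_num)) hy
  have tendsto_midpoint : Tendsto (fun h ↦ t₀ + h / 2) (𝓝 0) (𝓝 t₀) :=
    Continuous.tendsto' (by fun_prop) 0 t₀ (by simp)
  have predictor_error := isBigO_const_mul_pow_smul
    (flowDeriv_midpointPredictor_sub_isBigO (hF.of_le (by norm_num)) hy) 3⁻¹ 2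
  refine (predictor_error.add (twoPointQuadrature_isBigO y_contDiffAt)).congr' ?_ .rfl
  filter_upwards [tendsto_midpoint.eventually deriv_deriv_y] with h deriv_deriv_midpoint
  rw [deriv_y, deriv_deriv_y.self_of_nhds, deriv_deriv_midpoint, twoStageStep]
  module

end TwoStage

/-- Fourth-order local truncation error of the two-stage method: for the
autonomous ODE `y' = F(y)`, `y(0) = y₀`, with `F` four times continuously
differentiable, the two-stage update
`y* = y₀ + (Δt/2)F(y₀) + (Δt²/8)DF(y₀)(F(y₀))`,
`y¹ = y₀ + Δt F(y₀) + (Δt²/6)(DF(y₀)(F(y₀)) + 2 DF(y*)(F(y*)))`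
satisfies `‖y¹ − y(Δt)‖ = O(Δt⁵)` as `Δt → 0⁺`. -/
theorem two_stage_fourth_order_local_truncation_error
    (d : ℕ) (F : EuclideanSpace ℝ (Fin d) → EuclideanSpace ℝ (Fin d))
    (hF : ContDiff ℝ 4 F)
    (y : ℝ → EuclideanSpace ℝ (Fin d)) (y₀ : EuclideanSpace ℝ (Fin d))
    (hy : ∀ t : ℝ, HasDerivAt y (F (y t)) t) (hy₀ : y 0 = y₀) :
    (fun Δt : ℝ =>
        (y₀ + Δt • F y₀ + (Δt ^ 2 / 6) •
            (fderiv ℝ F y₀ (F y₀) + (2 : ℝ) •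
              (fderiv ℝ F (y₀ + (Δt / 2) • F y₀ + (Δt ^ 2 / 8) • fderiv ℝ F y₀ (F y₀))
                (F (y₀ + (Δt / 2) • F y₀ + (Δt ^ 2 / 8) • fderiv ℝ F y₀ (F y₀))))))
          - y Δt)
      =O[𝓝[>] (0 : ℝ)] (fun Δt => Δt ^ 5) := by
  subst hy₀
  simpa only [zero_add] using! (two_stage_fourth_order_local_truncation_error_general (t₀ := 0)
    hF.contDiffAt (.of_forall hy)).mono nhdsWithin_le_nhds
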